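/- Let φ(z) = (az + b)/(cz + d) be a linear fractional map with ad − bc ≠ 0, and define the associated linear fractional map φ*(z) = (conj(a)·z − conj(c)) / (−conj(b)·z + conj(d)). Then φ maps the open unit disc 𝔻 into itself if and only if φ* maps 𝔻 into itself. -/

import Mathlib

open scoped ComplexConjugate

/-- If a linear fractional map sends the open unit disc into itself, then its numerator is dominated
by its denominator on the closed disc. The value `0` that division assigns at a pole does no harm,
since the complement of the pole is dense. -/
theorem norm_num_le_norm_den_of_mapsTo_disc {a b c d : ℂ} (h_det : a * d - b * c ≠ 0)
    (h : ∀ z : ℂ, ‖z‖ < 1 → ‖(a * z + b) / (c * z + d)‖ < 1) {z : ℂ} (hz : ‖z‖ ≤ 1) :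
    ‖a * z + b‖ ≤ ‖c * z + d‖ := by
  have hdense : Dense {w : ℂ | c * w + d ≠ 0} := by
    refine (dense_compl_singleton (-d / c)).mono ?_
    intro w hw h0
    apply hw
    have hc : c ≠ 0 := by
      rintro rfl
      exact h_det (by linear_combination a * h0)
    rw [Set.mem_singleton_iff, eq_div_iff hc]
    linear_combination h0
  have hclosed : IsClosed {w : ℂ | ‖a * w + b‖ ≤ ‖c * w + d‖} :=
    isClosed_le (by fun_prop) (by fun_prop)
  have hsub : Metric.ball (0 : ℂ) 1 ∩ {w : ℂ | c * w + d ≠ 0} ⊆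
      {w : ℂ | ‖a * w + b‖ ≤ ‖c * w + d‖} := by
    rintro w ⟨hw, hne⟩
    have hlt := h w (mem_ball_zero_iff.mp hw)
    rw [norm_div, div_lt_one (norm_pos_iff.mpr hne)] at hlt
    exact hlt.le
  have hball : Metric.closedBall (0 : ℂ) 1 ⊆ {w : ℂ | ‖a * w + b‖ ≤ ‖c * w + d‖} := by
    rw [← closure_ball (0 : ℂ) one_ne_zero]
    exact closure_minimal ((hdense.open_subset_closure_inter Metric.isOpen_ball).trans
      (closure_minimal hsub hclosed)) hclosed
  exact hball (mem_closedBall_zero_iff.mpr hz)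

theorem norm_adjoint_num_lt_norm_adjoint_den {a b c d : ℂ} (h_det : a * d - b * c ≠ 0)
    (h : ∀ z : ℂ, ‖z‖ ≤ 1 → ‖a * z + b‖ ≤ ‖c * z + d‖) {w : ℂ} (hw : ‖w‖ < 1) :
    ‖a * w - c‖ < ‖-b * w + d‖ := by
  by_contra! hle
  have hne : a * w - c ≠ 0 := by
    intro h0
    rw [h0, norm_zero, norm_le_zero_iff] at hle
    exact h_det (by linear_combination a * hle + b * h0)
  obtain ⟨z, hz⟩ : ∃ z, z * (a * w - c) = -b * w + d := ⟨_, div_mul_cancel₀ _ hne⟩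
  have hz1 : ‖z‖ ≤ 1 := by
    rw [← hz, norm_mul] at hle
    exact le_of_mul_le_mul_right (by linarith) (norm_pos_iff.mpr hne)
  have hzw : c * z + d = (a * z + b) * w := by linear_combination -hz
  have hbound := h z hz1
  rw [hzw, norm_mul] at hbound
  have hnum : a * z + b = 0 := by
    rw [← norm_le_zero_iff]
    nlinarith [norm_nonneg (a * z + b)]
  have hden : c * z + d = 0 := by rw [hzw, hnum, zero_mul]
  exact h_det (by linear_combination a * hden - c * hnum)

theorem adjoint_mapsTo_disc_of_mapsTo_disc {a b c d : ℂ} (h_det : a * d - b * c ≠ 0)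
    (h : ∀ z : ℂ, ‖z‖ < 1 → ‖(a * z + b) / (c * z + d)‖ < 1) {z : ℂ} (hz : ‖z‖ < 1) :
    ‖(conj a * z - conj c) / (-conj b * z + conj d)‖ < 1 := by
  have hlt := norm_adjoint_num_lt_norm_adjoint_den h_det
    (fun _ => norm_num_le_norm_den_of_mapsTo_disc h_det h) (w := conj z) (by rwa [RCLike.norm_conj])
  rw [← RCLike.norm_conj (a * _ - c), ← RCLike.norm_conj (-b * _ + d)] at hlt
  simp only [map_sub, map_add, map_mul, map_neg, Complex.conj_conj] at hlt
  rwa [norm_div, div_lt_one ((norm_nonneg _).trans_lt hlt)]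

/-- For a linear fractional map `φ(z) = (az+b)/(cz+d)` with `ad - bc ≠ 0`,
with associated map `φ*(z) = (conj a · z - conj c)/(-conj b · z + conj d)`,
`φ` maps the open unit disc into itself iff `φ*` does. -/
theorem stmt_11 (a b c d : ℂ) (h_det : a * d - b * c ≠ 0) :
    (∀ z : ℂ, ‖z‖ < 1 → ‖(a * z + b) / (c * z + d)‖ < 1) ↔
      (∀ z : ℂ, ‖z‖ < 1 →
        ‖((starRingEnd ℂ) a * z - (starRingEnd ℂ) c) /
            (-(starRingEnd ℂ) b * z + (starRingEnd ℂ) d)‖ < 1) := by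
  refine ⟨fun h z hz => adjoint_mapsTo_disc_of_mapsTo_disc h_det h hz, fun h z hz => ?_⟩
  have h_det' : conj a * conj d - -conj c * -conj b ≠ 0 := by
    intro h0
    apply h_det
    rw [← map_eq_zero (starRingEnd ℂ)]
    simp only [map_sub, map_mul]
    linear_combination h0
  have hadj := adjoint_mapsTo_disc_of_mapsTo_disc h_det'
    (by simpa only [sub_eq_add_neg] using h) hz
  simpa only [map_neg, Complex.conj_conj, sub_neg_eq_add, neg_neg] using hadj
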